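/- arXiv:1407.5016 — 2 statements merged into one kernel-verified Lean document; each statement's English description precedes it below -/
import Mathlib

section
/- Let X be a real normed linear space that is smooth and strictly convex with dim X ≥ 3. Then the norm of X arises from an inner product if and only if for every element x ∈ X and every one-dimensional linear subspace G of X there exists an element g_0 ∈ G that is simultaneously the best approximation to x out of G and the best coapproximation to x out of G. -/
/-- A real normed linear space is smooth if every nonzero vector has a unique norming
functional: a continuous linear functional `f` with `‖f‖ = 1` and `f x = ‖x‖`. -/
def SmoothSpace (X : Type*) [NormedAddCommGroup X] [NormedSpace ℝ X] : Prop :=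
  ∀ x : X, x ≠ 0 → ∃! f : X →L[ℝ] ℝ, ‖f‖ = 1 ∧ f x = ‖x‖

/-!
Simultaneous best approximation and coapproximation out of lines makes Birkhoff orthogonality
symmetric in a smooth space. Hence `x ↦ ker (J x)`, with `J` the duality map, is a polarity: in the
coordinates of an orthogonal triple `u, v, w` it reads `(1, t, s) ↦ (1, f t, g s)`, and its symmetry
is the equivalence of `1 + f t * t' + g s * s' = 0` and `1 + f t' * t + g s' * s = 0`. For monotone
`f` and `g` this forces both to be linear. After rescaling `v`, every vector of the plane of `u`
and `v` is therefore orthogonal to its rotation by a right angle, so the norm is constant along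
`θ ↦ cos θ • u + sin θ • v` and the plane is Euclidean.
-/

open Real

section RealFunctions

lemma eq_of_norm_sub_le_mul_norm_sub_pow {E F : Type*} [NormedAddCommGroup E] [NormedSpace ℝ E]
    [NormedAddCommGroup F] [NormedSpace ℝ F] {f : E → F} {C : ℝ} {n : ℕ} (hn : 1 < n)
    (hf : ∀ x y, ‖f x - f y‖ ≤ C * ‖x - y‖ ^ n) (x y : E) : f x = f y := by
  have hderiv : ∀ y, HasFDerivAt f (0 : E →L[ℝ] F) y := fun y ↦ by
    have hO : (fun x ↦ f x - f y) =O[nhds y] fun x ↦ ‖x - y‖ ^ n :=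
      .of_bound C (.of_forall fun x ↦ by simpa using hf x y)
    simpa using (hO.hasFDerivAt (𝕜 := ℝ) hn).add_const (f y)
  exact is_const_of_fderiv_eq_zero (𝕜 := ℝ) (fun y ↦ (hderiv y).differentiableAt)
    (fun y ↦ (hderiv y).fderiv) x y

lemma bddAbove_range_of_mul_cos_sub_le {h : ℝ → ℝ} (hcos : ∀ θ φ, h θ * cos (φ - θ) ≤ h φ) :
    BddAbove (Set.range h) := by
  have hnonneg : ∀ θ, 0 ≤ h θ := fun θ ↦ by simpa using hcos (θ - π / 2) θ
  refine ⟨h 0 + h π + h (π / 2) + h (-(π / 2)), Set.forall_mem_range.2 fun θ ↦ ?_⟩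
  have h0 : h θ * cos θ ≤ h 0 := by simpa using hcos θ 0
  have hpi : h θ * -cos θ ≤ h π := by simpa [cos_pi_sub] using hcos θ π
  have hpi2 : h θ * sin θ ≤ h (π / 2) := by simpa [cos_pi_div_two_sub] using hcos θ (π / 2)
  have hneg_pi2 : h θ * -sin θ ≤ h (-(π / 2)) := by
    simpa [cos_sub] using hcos θ (-(π / 2))
  have habs_cos : h θ * |cos θ| ≤ h 0 + h π := by
    rcases abs_choice (cos θ) with habs | habs <;> rw [habs] <;> linarith [hnonneg 0, hnonneg π]
  have habs_sin : h θ * |sin θ| ≤ h (π / 2) + h (-(π / 2)) := by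
    rcases abs_choice (sin θ) with habs | habs <;> rw [habs] <;>
      linarith [hnonneg (π / 2), hnonneg (-(π / 2))]
  have hone : 1 ≤ |cos θ| + |sin θ| := by
    nlinarith [cos_sq_add_sin_sq θ, sq_abs (cos θ), sq_abs (sin θ), abs_nonneg (cos θ),
      abs_nonneg (sin θ)]
  linarith [le_mul_of_one_le_right (hnonneg θ) hone]

lemma eq_of_mul_cos_sub_le {h : ℝ → ℝ} (hcos : ∀ θ φ, h θ * cos (φ - θ) ≤ h φ) (θ φ : ℝ) :
    h θ = h φ := by
  obtain ⟨C, hC⟩ := bddAbove_range_of_mul_cos_sub_le hcos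
  replace hC : ∀ θ, h θ ≤ C := Set.forall_mem_range.1 hC
  have hC₀ : 0 ≤ C := le_trans (by simpa using hcos 0 (π / 2)) (hC (π / 2))
  have hsub : ∀ θ φ, h θ - h φ ≤ C / 2 * (θ - φ) ^ 2 := fun θ φ ↦
    calc h θ - h φ ≤ h θ * (1 - cos (φ - θ)) := by linarith [hcos θ φ]
      _ ≤ C * (1 - cos (φ - θ)) :=
        mul_le_mul_of_nonneg_right (hC θ) (sub_nonneg.2 (cos_le_one _))
      _ ≤ C * ((φ - θ) ^ 2 / 2) := by
        gcongr
        linarith [one_sub_sq_div_two_le_cos (x := φ - θ)]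
      _ = C / 2 * (θ - φ) ^ 2 := by ring
  refine eq_of_norm_sub_le_mul_norm_sub_pow (C := C / 2) one_lt_two (fun θ φ ↦ ?_) θ φ
  rw [norm_eq_abs, norm_eq_abs, sq_abs, abs_le']
  exact ⟨hsub θ φ, by linarith [hsub φ θ, sub_sq_comm θ φ]⟩

-- Up to the factor `f 1`, such an `f` is a monotone involution, hence the identity.
lemma eq_mul_of_monotone_of_mul_apply_eq {f G : ℝ → ℝ} (hf : Monotone f) (h1 : 0 < f 1)
    (hG : ∀ s t, s * f t = G (t * f s)) (t : ℝ) : f t = f 1 * t := by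
  have hinv : f (f t / f 1) = t * f 1 :=
    calc f (f t / f 1) = G (f t / f 1 * f 1) := by rw [← hG, one_mul]
      _ = G (1 * f t) := by rw [div_mul_cancel₀ _ h1.ne', one_mul]
      _ = t * f 1 := (hG t 1).symm
  rcases le_total (f t / f 1) t with hle | hle
  · have hmono := hf hle
    rw [div_le_iff₀ h1] at hle
    linarith
  · have hmono := hf hle
    rw [le_div_iff₀ h1] at hle
    linarith

end RealFunctions

lemma exists_ne_zero_forall_dual_eq_zero {K V : Type*} [Field K] [AddCommGroup V] [Module K V]
    {n : ℕ} (f : Fin n → Module.Dual K V) (hn : n < Module.rank K V) :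
    ∃ w : V, w ≠ 0 ∧ ∀ i, f i w = 0 := by
  by_contra! hcon
  have hinj : Function.Injective (LinearMap.pi f) := by
    rw [injective_iff_map_eq_zero]
    intro w hw
    by_contra hw₀
    obtain ⟨i, hi⟩ := hcon w hw₀
    exact hi (congrFun hw i)
  have hrank := LinearMap.lift_rank_le_of_injective _ hinj
  rw [rank_fin_fun, Cardinal.lift_natCast, Cardinal.lift_le_nat_iff] at hrank
  exact hn.not_ge hrank

section BirkhoffOrthogonal

variable {X : Type*} [NormedAddCommGroup X] [NormedSpace ℝ X] {x y : X}

/-- Birkhoff(–James) orthogonality: moving from `x` in the direction `y` does not decrease the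
norm. This relation is not symmetric in general. -/
def BirkhoffOrthogonal (x y : X) : Prop :=
  ∀ t : ℝ, ‖x‖ ≤ ‖x + t • y‖

lemma BirkhoffOrthogonal.of_apply_eq_zero {f : X →L[ℝ] ℝ} (hf : ‖f‖ = 1) (hfx : f x = ‖x‖)
    (hfy : f y = 0) : BirkhoffOrthogonal x y := fun t ↦
  calc ‖x‖ = f (x + t • y) := by simp [hfx, hfy]
    _ ≤ ‖f‖ * ‖x + t • y‖ := (le_abs_self _).trans (f.le_opNorm _)
    _ = ‖x + t • y‖ := by rw [hf, one_mul]

-- A norming functional of the class of `x` modulo `y` pulls back to one of `x`, because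
-- orthogonality says that the class has norm `‖x‖`.
lemma BirkhoffOrthogonal.exists_norming_apply_eq_zero (h : BirkhoffOrthogonal x y) (hx : x ≠ 0) :
    ∃ f : X →L[ℝ] ℝ, ‖f‖ = 1 ∧ f x = ‖x‖ ∧ f y = 0 := by
  let S := Submodule.span ℝ {y}
  have hnorm : ‖S.mkQL x‖ = ‖x‖ := by
    refine le_antisymm (Submodule.Quotient.norm_mk_le S x)
      (QuotientAddGroup.le_norm_iff.2 fun m hm ↦ ?_)
    obtain ⟨t, ht⟩ := Submodule.mem_span_singleton.1 ((Submodule.Quotient.eq S).1 hm)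
    simpa [ht] using h t
  obtain ⟨g, hg, hgx⟩ := exists_dual_vector ℝ (S.mkQL x) (by rwa [hnorm, norm_ne_zero_iff])
  have hfx : g (S.mkQL x) = ‖x‖ := hgx.trans hnorm
  refine ⟨g ∘L S.mkQL, le_antisymm ?_ ?_, hfx, ?_⟩
  · refine ContinuousLinearMap.opNorm_le_bound _ zero_le_one fun z ↦ ?_
    calc ‖g (S.mkQL z)‖ ≤ ‖g‖ * ‖S.mkQL z‖ := g.le_opNorm _
      _ ≤ 1 * ‖z‖ := by
        rw [hg]
        gcongr
        exact Submodule.Quotient.norm_mk_le S z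
  · have hle := (g ∘L S.mkQL).ratio_le_opNorm x
    rwa [ContinuousLinearMap.comp_apply, hfx, norm_norm,
      div_self (norm_ne_zero_iff.2 hx)] at hle
  · have hy : S.mkQL y = 0 :=
      (Submodule.Quotient.mk_eq_zero S).2 (Submodule.mem_span_singleton_self y)
    simp [hy]

lemma BirkhoffOrthogonal.of_norm_smul_le (h : ∀ s : ℝ, ‖s • x‖ ≤ ‖y + s • x‖) :
    BirkhoffOrthogonal x y := by
  intro t
  rcases eq_or_ne t 0 with rfl | ht
  · simp
  · have hs := h t⁻¹
    have hfactor : y + t⁻¹ • x = t⁻¹ • (x + t • y) := by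
      rw [smul_add, inv_smul_smul₀ ht, add_comm]
    rw [hfactor, norm_smul, norm_smul] at hs
    exact le_of_mul_le_mul_left hs (norm_pos_iff.2 (inv_ne_zero ht))

variable (X) in
/-- Every point has, out of every line through the origin, a best approximation that is also a
best coapproximation. -/
def HasBestApproxAndCoapprox : Prop :=
  ∀ (x : X) (G : Submodule ℝ X), Module.finrank ℝ G = 1 →
    ∃ g₀ ∈ G, (∀ g ∈ G, ‖x - g₀‖ ≤ ‖x - g‖) ∧ (∀ g ∈ G, ‖g₀ - g‖ ≤ ‖x - g‖)

lemma HasBestApproxAndCoapprox.exists_birkhoffOrthogonal (h : HasBestApproxAndCoapprox X)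
    (x : X) (hy : y ≠ 0) :
    ∃ c : ℝ, BirkhoffOrthogonal (x - c • y) y ∧ BirkhoffOrthogonal y (x - c • y) := by
  obtain ⟨g₀, hg₀, hbest, hcoapprox⟩ := h x (Submodule.span ℝ {y}) (finrank_span_singleton hy)
  obtain ⟨c, rfl⟩ := Submodule.mem_span_singleton.1 hg₀
  have hmem : ∀ s : ℝ, (c - s) • y ∈ Submodule.span ℝ {y} := fun s ↦
    Submodule.smul_mem _ _ (Submodule.mem_span_singleton_self y)
  have hsub : ∀ s : ℝ, x - (c - s) • y = x - c • y + s • y := fun s ↦ by module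
  refine ⟨c, fun s ↦ ?_, .of_norm_smul_le fun s ↦ ?_⟩
  · rw [← hsub]
    exact hbest _ (hmem s)
  · have hs : c • y - (c - s) • y = s • y := by module
    rw [← hsub, ← hs]
    exact hcoapprox _ (hmem s)

namespace SmoothSpace

lemma birkhoffOrthogonal_iff (hX : SmoothSpace X) (hx : x ≠ 0) {f : X →L[ℝ] ℝ} (hf : ‖f‖ = 1)
    (hfx : f x = ‖x‖) : BirkhoffOrthogonal x y ↔ f y = 0 := by
  refine ⟨fun h ↦ ?_, .of_apply_eq_zero hf hfx⟩
  obtain ⟨g, hg, hgx, hgy⟩ := h.exists_norming_apply_eq_zero hx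
  rwa [(hX x hx).unique ⟨hf, hfx⟩ ⟨hg, hgx⟩]

lemma birkhoffOrthogonal_symm (hX : SmoothSpace X) (happrox : HasBestApproxAndCoapprox X)
    (h : BirkhoffOrthogonal x y) : BirkhoffOrthogonal y x := by
  rcases eq_or_ne x 0 with rfl | hx
  · simp [BirkhoffOrthogonal]
  obtain ⟨c, hyx, hxy⟩ := happrox.exists_birkhoffOrthogonal y hx
  obtain ⟨f, ⟨hf, hfx⟩, -⟩ := hX x hx
  have hfy : f y = 0 := (hX.birkhoffOrthogonal_iff hx hf hfx).1 h
  have hc : c * ‖x‖ = 0 := by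
    simpa [hfy, hfx] using (hX.birkhoffOrthogonal_iff hx hf hfx).1 hxy
  have hc₀ : c = 0 := (mul_eq_zero.1 hc).resolve_right (norm_ne_zero_iff.2 hx)
  simpa [hc₀] using hyx

end SmoothSpace

end BirkhoffOrthogonal

/-- `J` is a (single-valued) duality map of `X`, normalized by `J x x = ‖x‖ ^ 2`, for which the
orthogonality relation `J x y = 0` is symmetric. Linearity in `x` is not part of the definition. -/
structure IsSymmDualityMap {X : Type*} [NormedAddCommGroup X] [NormedSpace ℝ X]
    (J : X → Module.Dual ℝ X) : Prop where
  apply_self (x : X) : J x x = ‖x‖ ^ 2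
  apply_le (x y : X) : J x y ≤ ‖x‖ * ‖y‖
  symm {x y : X} : J x y = 0 → J y x = 0

lemma SmoothSpace.exists_isSymmDualityMap {X : Type*} [NormedAddCommGroup X] [NormedSpace ℝ X]
    (hX : SmoothSpace X) (hsymm : ∀ ⦃x y : X⦄, BirkhoffOrthogonal x y → BirkhoffOrthogonal y x) :
    ∃ J : X → Module.Dual ℝ X, IsSymmDualityMap J := by
  have hex : ∀ x : X, ∃ f : X →L[ℝ] ℝ, x ≠ 0 → ‖f‖ = 1 ∧ f x = ‖x‖ := fun x ↦ by
    rcases eq_or_ne x 0 with rfl | hx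
    · exact ⟨0, fun h ↦ absurd rfl h⟩
    · exact (hX x hx).exists.imp fun f hf _ ↦ hf
  choose D hD using hex
  have hortho : ∀ {x y}, x ≠ 0 → (BirkhoffOrthogonal x y ↔ D x y = 0) := fun hx ↦
    hX.birkhoffOrthogonal_iff hx (hD _ hx).1 (hD _ hx).2
  refine ⟨fun x ↦ ‖x‖ • (D x : X →ₗ[ℝ] ℝ), fun x ↦ ?_, fun x y ↦ ?_, fun {x y} hxy ↦ ?_⟩
  · rcases eq_or_ne x 0 with rfl | hx
    · simp
    · simp [(hD x hx).2, sq]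
  · rcases eq_or_ne x 0 with rfl | hx
    · simp
    · have hle : D x y ≤ ‖y‖ := by
        simpa [(hD x hx).1] using (le_abs_self _).trans ((D x).le_opNorm y)
      exact mul_le_mul_of_nonneg_left hle (norm_nonneg x)
  · rcases eq_or_ne x 0 with rfl | hx
    · simp
    rcases eq_or_ne y 0 with rfl | hy
    · simp
    have hxy : D x y = 0 := by simpa [hx] using hxy
    simp [(hortho hy).1 (hsymm ((hortho hx).2 hxy))]

/-- The slope of the line in the dual plane spanned by `J (u + t • v)`: up to a factor, the
functional `J (u + t • v)` restricts to `(1, dualSlope J u v t)` in the basis dual to `u`, `v`. -/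
noncomputable def dualSlope {X : Type*} [AddCommGroup X] [Module ℝ X] (J : X → Module.Dual ℝ X)
    (u v : X) (t : ℝ) : ℝ :=
  J (u + t • v) v / J (u + t • v) u

namespace IsSymmDualityMap

variable {X : Type*} [NormedAddCommGroup X] [NormedSpace ℝ X] {J : X → Module.Dual ℝ X}
  {u v w x y z : X}

lemma abs_apply_le (hJ : IsSymmDualityMap J) (x y : X) : |J x y| ≤ ‖x‖ * ‖y‖ :=
  abs_le'.2 ⟨hJ.apply_le x y, by simpa using hJ.apply_le x (-y)⟩

lemma apply_mul_apply_le (hJ : IsSymmDualityMap J) (x y : X) :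
    J x y * J y x ≤ J x x * J y y :=
  calc J x y * J y x ≤ |J x y| * |J y x| := (le_abs_self _).trans (abs_mul _ _).le
    _ ≤ (‖x‖ * ‖y‖) * (‖y‖ * ‖x‖) := by
      gcongr <;> exact hJ.abs_apply_le _ _
    _ = J x x * J y y := by
      rw [hJ.apply_self, hJ.apply_self]
      ring

lemma apply_smul_left_eq_zero (hJ : IsSymmDualityMap J) (h : J x y = 0) (c : ℝ) :
    J (c • x) y = 0 :=
  hJ.symm (by rw [map_smul, hJ.symm h, smul_zero])

lemma apply_add_left_eq_zero (hJ : IsSymmDualityMap J) (hx : J x z = 0) (hy : J y z = 0) :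
    J (x + y) z = 0 :=
  hJ.symm (by rw [map_add, hJ.symm hx, hJ.symm hy, add_zero])

lemma apply_add_left_pos (hJ : IsSymmDualityMap J) (hu : u ≠ 0) (huw : J u w = 0) :
    0 < J (u + w) u := by
  have hself : ∀ {a b : X}, J a b = 0 → J a (a + b) = ‖a‖ ^ 2 := fun h ↦ by
    rw [map_add, h, add_zero, hJ.apply_self]
  have hw : ‖w‖ ≤ ‖u + w‖ := by
    rcases eq_or_ne w 0 with rfl | hw₀
    · simp
    · refine le_of_mul_le_mul_left ?_ (norm_pos_iff.2 hw₀)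
      rw [← sq, ← hself (hJ.symm huw), add_comm w u]
      exact hJ.apply_le w (u + w)
  have hnonneg : 0 ≤ J (u + w) u := by
    have hsum : J (u + w) u + J (u + w) w = ‖u + w‖ ^ 2 := by rw [← map_add, hJ.apply_self]
    nlinarith [hJ.apply_le (u + w) w, norm_nonneg (u + w)]
  refine hnonneg.lt_of_ne' fun h₀ ↦ hu ?_
  simpa [hself huw] using hJ.symm h₀

lemma dualSlope_monotone (hJ : IsSymmDualityMap J) (hu : u ≠ 0) (huv : J u v = 0) :
    Monotone (dualSlope J u v) := by
  have hpos : ∀ t : ℝ, 0 < J (u + t • v) u := fun t ↦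
    hJ.apply_add_left_pos hu (by rw [map_smul, huv, smul_zero])
  intro t t' htt'
  rcases htt'.eq_or_lt with rfl | hlt
  · rfl
  have hcyclic := hJ.apply_mul_apply_le (u + t • v) (u + t' • v)
  simp only [map_add, map_smul, smul_eq_mul] at hcyclic
  have hdiff : (t' - t) * (J (u + t • v) v * J (u + t' • v) u) ≤
      (t' - t) * (J (u + t' • v) v * J (u + t • v) u) := by linarith
  exact (div_le_div_iff₀ (hpos t) (hpos t')).2 (le_of_mul_le_mul_left hdiff (sub_pos.2 hlt))

-- The vector `J x v • u - J x u • v`, `x = u + t • v`, is orthogonal to `x` and `w`, hence to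
-- their sum.
lemma apply_add_eq_dualSlope_mul (hJ : IsSymmDualityMap J) (hu : u ≠ 0) (huv : J u v = 0)
    (hwu : J w u = 0) (hwv : J w v = 0) (t : ℝ) :
    J (u + t • v + w) v = dualSlope J u v t * J (u + t • v + w) u := by
  have hpos : 0 < J (u + t • v) u :=
    hJ.apply_add_left_pos hu (by rw [map_smul, huv, smul_zero])
  have hker : J (u + t • v + w) (J (u + t • v) v • u - J (u + t • v) u • v) = 0 := by
    refine hJ.apply_add_left_eq_zero ?_ ?_
    · simp only [map_sub, map_smul, smul_eq_mul]
      ring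
    · simp [hwu, hwv]
  simp only [map_sub, map_smul, smul_eq_mul] at hker
  rw [dualSlope, div_mul_eq_mul_div, eq_div_iff hpos.ne']
  linarith

-- In the coordinates of an orthogonal triple the polarity defined by `J` is
-- `(1, t, s) ↦ (1, dualSlope J u v t, dualSlope J u w s)`.
lemma apply_eq_zero_iff_dualSlope (hJ : IsSymmDualityMap J) (hu : u ≠ 0) (huv : J u v = 0)
    (huw : J u w = 0) (hvw : J v w = 0) (t s t' s' : ℝ) :
    J (u + t • v + s • w) (u + t' • v + s' • w) = 0 ↔
      1 + t' * dualSlope J u v t + s' * dualSlope J u w s = 0 := by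
  have hv : J (u + t • v + s • w) v = dualSlope J u v t * J (u + t • v + s • w) u :=
    hJ.apply_add_eq_dualSlope_mul hu huv (hJ.apply_smul_left_eq_zero (hJ.symm huw) s)
      (hJ.apply_smul_left_eq_zero (hJ.symm hvw) s) t
  have hw : J (u + t • v + s • w) w = dualSlope J u w s * J (u + t • v + s • w) u := by
    rw [add_right_comm]
    exact hJ.apply_add_eq_dualSlope_mul hu huw (hJ.apply_smul_left_eq_zero (hJ.symm huv) t)
      (hJ.apply_smul_left_eq_zero hvw t) s
  have hpos : 0 < J (u + t • v + s • w) u := by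
    rw [add_assoc]
    exact hJ.apply_add_left_pos hu (by simp [huv, huw])
  have hfactor : J (u + t • v + s • w) (u + t' • v + s' • w) =
      J (u + t • v + s • w) u * (1 + t' * dualSlope J u v t + s' * dualSlope J u w s) := by
    rw [map_add, map_add, map_smul, map_smul, hv, hw]
    simp only [smul_eq_mul]
    ring
  rw [hfactor, mul_eq_zero, or_iff_right hpos.ne']

lemma dualSlope_one_pos (hJ : IsSymmDualityMap J) (hu : u ≠ 0) (hv : v ≠ 0) (huv : J u v = 0) :
    0 < dualSlope J u v 1 := by
  rw [dualSlope, one_smul]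
  refine div_pos ?_ (hJ.apply_add_left_pos hu huv)
  rw [add_comm]
  exact hJ.apply_add_left_pos hv (hJ.symm huv)

lemma dualSlope_eq_mul (hJ : IsSymmDualityMap J) (hu : u ≠ 0) (hv : v ≠ 0) (hw : w ≠ 0)
    (huv : J u v = 0) (huw : J u w = 0) (hvw : J v w = 0) (t : ℝ) :
    dualSlope J u v t = dualSlope J u v 1 * t := by
  set f := dualSlope J u v
  set g := dualSlope J u w
  have hg : g 1 ≠ 0 := (hJ.dualSlope_one_pos hu hw huw).ne'
  have hsymm : ∀ t t' s', 1 + t' * f t + s' * g 1 = 0 → 1 + t * f t' + 1 * g s' = 0 :=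
    fun t t' s' h ↦ (hJ.apply_eq_zero_iff_dualSlope hu huv huw hvw _ _ _ _).1
      (hJ.symm ((hJ.apply_eq_zero_iff_dualSlope hu huv huw hvw _ _ _ _).2 h))
  -- Choosing `s'` to satisfy the premise shows that `t * f t'` is a function of `t' * f t`.
  refine eq_mul_of_monotone_of_mul_apply_eq (G := fun r ↦ -1 - g (-(1 + r) / g 1))
    (hJ.dualSlope_monotone hu huv) (hJ.dualSlope_one_pos hu hv huv) (fun t t' ↦ ?_) t
  have := hsymm t t' (-(1 + t' * f t) / g 1) (by rw [div_mul_cancel₀ _ hg]; ring)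
  linarith

lemma apply_smul_add_smul_eq_zero_of_dualSlope (hJ : IsSymmDualityMap J) (hu : u ≠ 0)
    (huv : J u v = 0) {a : ℝ} (hslope : ∀ t, dualSlope J u v t = a * t) (p q : ℝ) :
    J (p • u + q • v) (p • v - (a * q) • u) = 0 := by
  rcases eq_or_ne p 0 with rfl | hp
  · simp [hJ.apply_smul_left_eq_zero (hJ.symm huv) q]
  · have hpos : 0 < J (u + (q / p) • v) u :=
      hJ.apply_add_left_pos hu (by rw [map_smul, huv, smul_zero])
    have hker : J (u + (q / p) • v) (p • v - (a * q) • u) = 0 := by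
      have := hslope (q / p)
      rw [dualSlope, div_eq_iff hpos.ne'] at this
      simp only [map_sub, map_smul, smul_eq_mul, this]
      field_simp
      ring
    have hsmul : p • u + q • v = p • (u + (q / p) • v) := by
      rw [smul_add, smul_smul, mul_div_cancel₀ _ hp]
    rw [hsmul]
    exact hJ.apply_smul_left_eq_zero hker p

lemma exists_pos_apply_rotation_eq_zero (hJ : IsSymmDualityMap J) (hu : u ≠ 0) (hv : v ≠ 0)
    (hw : w ≠ 0) (huv : J u v = 0) (huw : J u w = 0) (hvw : J v w = 0) :
    ∃ c : ℝ, 0 < c ∧ ∀ p q : ℝ, J (p • u + q • c • v) (p • c • v - q • u) = 0 := by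
  set a := dualSlope J u v 1
  have ha : 0 < a := hJ.dualSlope_one_pos hu hv huv
  refine ⟨(√a)⁻¹, inv_pos.2 (sqrt_pos.2 ha), fun p q ↦ ?_⟩
  have hac : a * (√a)⁻¹ * (√a)⁻¹ = 1 := by
    rw [mul_assoc, ← mul_inv, mul_self_sqrt ha.le, mul_inv_cancel₀ ha.ne']
  have hker := hJ.apply_smul_add_smul_eq_zero_of_dualSlope hu huv
    (hJ.dualSlope_eq_mul hu hv hw huv huw hvw) p (q * (√a)⁻¹)
  have hrot : p • (√a)⁻¹ • v - q • u = (√a)⁻¹ • (p • v - (a * (q * (√a)⁻¹)) • u) := by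
    have hq : (√a)⁻¹ * (a * (q * (√a)⁻¹)) = q := by linear_combination q * hac
    rw [smul_sub, smul_comm p, smul_smul _ _ u, hq]
  rw [hrot, map_smul, smul_smul q, hker, smul_zero]

lemma norm_cos_smul_add_sin_smul (hJ : IsSymmDualityMap J)
    (hrot : ∀ p q : ℝ, J (p • u + q • v) (p • v - q • u) = 0) (θ : ℝ) :
    ‖cos θ • u + sin θ • v‖ = ‖u‖ := by
  let e : ℝ → X := fun θ ↦ cos θ • u + sin θ • v
  have hcos : ∀ θ φ, ‖e θ‖ * cos (φ - θ) ≤ ‖e φ‖ := fun θ φ ↦ by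
    have hsplit : e φ = cos (φ - θ) • e θ + sin (φ - θ) • (cos θ • v - sin θ • u) := by
      have hφ : e φ = cos (φ - θ + θ) • u + sin (φ - θ + θ) • v := by rw [sub_add_cancel]
      rw [hφ, cos_add, sin_add]
      module
    have happly : J (e θ) (e φ) = cos (φ - θ) * ‖e θ‖ ^ 2 := by
      rw [hsplit, map_add, map_smul, map_smul, hrot, hJ.apply_self]
      simp
    rcases (norm_nonneg (e θ)).eq_or_lt with h₀ | hpos
    · simp [← h₀]
    · refine le_of_mul_le_mul_left ?_ hpos
      linarith [hJ.apply_le (e θ) (e φ)]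
  simpa [e] using eq_of_mul_cos_sub_le (h := fun θ ↦ ‖e θ‖) hcos θ 0

lemma norm_add_smul_sq (hJ : IsSymmDualityMap J)
    (hrot : ∀ p q : ℝ, J (p • u + q • v) (p • v - q • u) = 0) (t : ℝ) :
    ‖u + t • v‖ ^ 2 = (1 + t ^ 2) * ‖u‖ ^ 2 := by
  have hsin : sin (arctan t) = cos (arctan t) * t := by
    rw [sin_arctan, cos_arctan]
    ring
  have hnorm : cos (arctan t) * ‖u + t • v‖ = ‖u‖ := by
    rw [← hJ.norm_cos_smul_add_sin_smul hrot (arctan t), hsin, mul_smul, ← smul_add, norm_smul,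
      norm_of_nonneg (cos_arctan_pos t).le]
  rw [← hnorm, mul_pow, cos_sq_arctan]
  field_simp

lemma norm_add_sq_of_orthogonal_triple (hJ : IsSymmDualityMap J) (hu : u ≠ 0) (hv : v ≠ 0)
    (hw : w ≠ 0) (huv : J u v = 0) (huw : J u w = 0) (hvw : J v w = 0) :
    ‖u + v‖ ^ 2 = ‖u‖ ^ 2 + ‖v‖ ^ 2 := by
  obtain ⟨c, hc, hrot⟩ := hJ.exists_pos_apply_rotation_eq_zero hu hv hw huv huw hvw
  have hnorm : c * ‖v‖ = ‖u‖ := by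
    simpa [norm_smul, abs_of_pos hc] using hJ.norm_cos_smul_add_sin_smul hrot (π / 2)
  have hadd := hJ.norm_add_smul_sq hrot c⁻¹
  rw [inv_smul_smul₀ hc.ne'] at hadd
  rw [hadd, ← hnorm]
  field_simp

lemma norm_add_sq (hJ : IsSymmDualityMap J) (hdim : 3 ≤ Module.rank ℝ X) (huv : J u v = 0) :
    ‖u + v‖ ^ 2 = ‖u‖ ^ 2 + ‖v‖ ^ 2 := by
  rcases eq_or_ne u 0 with rfl | hu
  · simp
  rcases eq_or_ne v 0 with rfl | hv
  · simp
  obtain ⟨w, hw, hker⟩ := exists_ne_zero_forall_dual_eq_zero ![J u, J v]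
    (lt_of_lt_of_le (by norm_num) hdim)
  exact hJ.norm_add_sq_of_orthogonal_triple hu hv hw huv (hker 0) (hker 1)

lemma parallelogram_law (hJ : IsSymmDualityMap J) (hdim : 3 ≤ Module.rank ℝ X) (x y : X) :
    ‖x + y‖ ^ 2 + ‖x - y‖ ^ 2 = 2 * (‖x‖ ^ 2 + ‖y‖ ^ 2) := by
  rcases eq_or_ne x 0 with rfl | hx
  · rw [zero_add, zero_sub, norm_neg, norm_zero]
    ring
  obtain ⟨q, z, hxz, rfl⟩ : ∃ (q : ℝ) (z : X), J x z = 0 ∧ y = q • x + z := by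
    refine ⟨J x y / ‖x‖ ^ 2, y - (J x y / ‖x‖ ^ 2) • x, ?_, by module⟩
    rw [map_sub, map_smul, hJ.apply_self, smul_eq_mul,
      div_mul_cancel₀ _ (pow_ne_zero 2 (norm_ne_zero_iff.2 hx)), sub_self]
  have hpyth : ∀ r s : ℝ, ‖r • x + s • z‖ ^ 2 = r ^ 2 * ‖x‖ ^ 2 + s ^ 2 * ‖z‖ ^ 2 := fun r s ↦ by
    rw [hJ.norm_add_sq hdim (hJ.apply_smul_left_eq_zero (by rw [map_smul, hxz, smul_zero]) r)]
    simp only [norm_smul, mul_pow, norm_eq_abs, sq_abs]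
  have hadd : x + (q • x + z) = (1 + q) • x + (1 : ℝ) • z := by module
  have hsub : x - (q • x + z) = (1 - q) • x + (-1 : ℝ) • z := by module
  have hy : q • x + z = q • x + (1 : ℝ) • z := by module
  rw [hadd, hsub, hy, hpyth, hpyth, hpyth]
  ring

end IsSymmDualityMap

lemma exists_bestApprox_and_coapprox {X : Type*} [NormedAddCommGroup X] [InnerProductSpace ℝ X]
    (x : X) (G : Submodule ℝ X) [G.HasOrthogonalProjection] :
    ∃ g₀ ∈ G, (∀ g ∈ G, ‖x - g₀‖ ≤ ‖x - g‖) ∧ (∀ g ∈ G, ‖g₀ - g‖ ≤ ‖x - g‖) := by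
  have hproj : ∀ g ∈ G, G.starProjection (x - g) = G.starProjection x - g := fun g hg ↦ by
    rw [map_sub, Submodule.starProjection_eq_self_iff.2 hg]
  refine ⟨G.starProjection x, G.starProjection_apply_mem x, fun g hg ↦ ?_, fun g hg ↦ ?_⟩
  · have hperp : Gᗮ.starProjection (x - g) = x - G.starProjection x := by
      rw [Submodule.starProjection_orthogonal_val, hproj g hg, sub_sub_sub_cancel_right]
    rw [← hperp]
    exact Gᗮ.norm_starProjection_apply_le _
  · rw [← hproj g hg]
    exact G.norm_starProjection_apply_le _

section General

variable {X : Type*} [NormedAddCommGroup X] [NormedSpace ℝ X]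

-- An `InnerProductSpace ℝ X` structure comes with its own scalar multiplication. The parallelogram
-- law involves only addition and the norm, so it does not see the difference from the given one.
lemma nonempty_innerProductSpace_iff_parallelogram_law :
    Nonempty (InnerProductSpace ℝ X) ↔
      ∀ x y : X, ‖x + y‖ ^ 2 + ‖x - y‖ ^ 2 = 2 * (‖x‖ ^ 2 + ‖y‖ ^ 2) :=
  ⟨fun ⟨_⟩ ↦ parallelogram_law_with_norm ℝ,
    fun h ↦ ⟨InnerProductSpace.ofNorm ℝ (by simpa only [sq] using h)⟩⟩

lemma HasBestApproxAndCoapprox.of_parallelogram_law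
    (h : ∀ x y : X, ‖x + y‖ ^ 2 + ‖x - y‖ ^ 2 = 2 * (‖x‖ ^ 2 + ‖y‖ ^ 2)) :
    HasBestApproxAndCoapprox X := by
  let _ := InnerProductSpace.ofNorm ℝ (E := X) (by simpa only [sq] using h)
  intro x G hG
  have : FiniteDimensional ℝ G := Module.finite_of_finrank_eq_succ hG
  exact exists_bestApprox_and_coapprox x G

theorem stmt_3_general (hX : SmoothSpace X) (hdim : 3 ≤ Module.rank ℝ X) :
    Nonempty (InnerProductSpace ℝ X) ↔ HasBestApproxAndCoapprox X := by
  rw [nonempty_innerProductSpace_iff_parallelogram_law]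
  refine ⟨HasBestApproxAndCoapprox.of_parallelogram_law, fun happrox ↦ ?_⟩
  obtain ⟨J, hJ⟩ := hX.exists_isSymmDualityMap fun _ _ ↦ hX.birkhoffOrthogonal_symm happrox
  exact hJ.parallelogram_law hdim

end General

theorem stmt_3 {X : Type*} [NormedAddCommGroup X] [NormedSpace ℝ X] [StrictConvexSpace ℝ X]
    (hsm : SmoothSpace X) (hdim : 3 ≤ Module.rank ℝ X) :
    Nonempty (InnerProductSpace ℝ X) ↔
      ∀ (x : X) (G : Submodule ℝ X), Module.finrank ℝ G = 1 →
        ∃ g₀ ∈ G, (∀ g ∈ G, ‖x - g₀‖ ≤ ‖x - g‖) ∧ (∀ g ∈ G, ‖g₀ - g‖ ≤ ‖x - g‖) :=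
  stmt_3_general hsm hdim
end

section
/- Let X be a finite dimensional real smooth normed linear space with dim X = n ≥ 3. Then the norm of X arises from an inner product if and only if for every unit vector e of X there exists a strongly orthonormal Hamel basis {e_1, e_2, ..., e_n} of X in the sense of Birkhoff-James containing e such that for each i ∈ {1, ..., n}, the zero vector θ is the best coapproximation to e_i out of span{e_1, ..., e_{i-1}, e_{i+1}, ..., e_n}. -/
/-!
For a smooth space, Birkhoff-James orthogonality `x ⊥ y` says that the norming functional of `x`
kills `y`, so `x ⊥ ·` is a hyperplane. The coapproximation condition makes `⊥` symmetric: in the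
given basis, the hyperplane orthogonal to `e` is the span of the other members, and these are
orthogonal to `e`. The remaining content is that symmetry in dimension at least three forces an
inner product.

Given `e ⊥ h`, let `α t` be the slope with `e + t h ⊥ h - α(t) e`. A third vector orthogonal to
both makes `α` multiplicative up to a constant, symmetry gives `α (-1 / α t) = -1 / t`, and the norm
inequality makes `α` increasing. The normalized slope `α / α 1` is therefore an increasing
involution, i.e. the identity, so `α` is linear. After rescaling `h`, every vector of the plane is
orthogonal to its quarter turn. Then `‖u (θ + δ)‖ ≥ cos δ ‖u θ‖` along the unit circle `u` of the
plane, so the norm has zero derivative there, and the Pythagorean theorem and the parallelogram law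
follow.
-/

/-- `x` together with the family is strongly orthonormal *relative to* the element `x i₀`
in the sense of Birkhoff-James: all members are unit vectors and
`‖x i₀‖ < ‖x i₀ + ∑_{j ≠ i₀} c j • x j‖` whenever not all the `c j` (`j ≠ i₀`) vanish. -/
def StronglyOrthRel {X : Type*} [NormedAddCommGroup X] [NormedSpace ℝ X]
    {n : ℕ} (x : Fin n → X) (i₀ : Fin n) : Prop :=
  (∀ i, ‖x i‖ = 1) ∧
    ∀ c : Fin n → ℝ, (∃ j, j ≠ i₀ ∧ c j ≠ 0) →
      ‖x i₀‖ < ‖x i₀ + ∑ j ∈ Finset.univ.erase i₀, c j • x j‖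

/-- A finite family of unit vectors that is strongly orthonormal in the sense of
Birkhoff-James. -/
def StronglyOrthSet {X : Type*} [NormedAddCommGroup X] [NormedSpace ℝ X]
    {n : ℕ} (x : Fin n → X) : Prop :=
  ∀ i, StronglyOrthRel x i


open Submodule

/-- Birkhoff-James orthogonality: `x` is a point of smallest norm on the line through `x` in the
direction `y`. -/
def BirkhoffOrth {X : Type*} [NormedAddCommGroup X] [NormedSpace ℝ X] (x y : X) : Prop :=
  ∀ t : ℝ, ‖x‖ ≤ ‖x + t • y‖

/-- A norming functional of `x`, chosen by the Hahn-Banach theorem. It has norm at most one; in a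
smooth space it is the only one unless `x = 0`. -/
noncomputable def normingFunctional {X : Type*} [NormedAddCommGroup X] [NormedSpace ℝ X] (x : X) :
    StrongDual ℝ X :=
  (exists_dual_vector'' ℝ x).choose

/-- For `e ≠ 0` orthogonal to `h` in a smooth space with symmetric orthogonality, the unique `a`
such that `e + t • h` is orthogonal to `h - a • e`; see `SmoothSpace.birkhoffOrth_sub_smul_iff`. In
other spaces the denominator may vanish. -/
noncomputable def conjugateSlope {X : Type*} [NormedAddCommGroup X] [NormedSpace ℝ X]
    (e h : X) (t : ℝ) : ℝ :=
  normingFunctional (e + t • h) h / normingFunctional (e + t • h) e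

section Orthogonality

variable {X : Type*} [NormedAddCommGroup X] [NormedSpace ℝ X] {x y z : X}

namespace BirkhoffOrth

lemma zero_left (y : X) : BirkhoffOrth 0 y := fun t => by simp

lemma zero_right (x : X) : BirkhoffOrth x 0 := fun t => by simp

lemma smul_right (h : BirkhoffOrth x y) (c : ℝ) : BirkhoffOrth x (c • y) := fun t => by
  simpa only [smul_smul] using h (t * c)

lemma smul_left (h : BirkhoffOrth x y) (c : ℝ) : BirkhoffOrth (c • x) y := fun t => by
  rcases eq_or_ne c 0 with rfl | hc
  · simp
  calc ‖c • x‖ = ‖c‖ * ‖x‖ := norm_smul c x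
    _ ≤ ‖c‖ * ‖x + (t / c) • y‖ := by gcongr; exact h _
    _ = ‖c • x + t • y‖ := by rw [← norm_smul, smul_add, smul_smul, mul_div_cancel₀ t hc]

lemma eq_zero_of_self (h : BirkhoffOrth x x) : x = 0 := by
  simpa using h (-1)

lemma add_smul_ne_zero (h : BirkhoffOrth x y) (hx : x ≠ 0) (t : ℝ) : x + t • y ≠ 0 :=
  norm_pos_iff.1 ((norm_pos_iff.2 hx).trans_le (h t))

end BirkhoffOrth

lemma norm_zero_sub_le_iff_birkhoffOrth {G : Submodule ℝ X} :
    (∀ g ∈ G, ‖0 - g‖ ≤ ‖x - g‖) ↔ ∀ g ∈ G, BirkhoffOrth g x := by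
  refine ⟨fun h g hg t => ?_, fun h g hg => ?_⟩
  · rcases eq_or_ne t 0 with rfl | ht
    · simp
    calc ‖g‖ = ‖t‖ * ‖0 - (-t⁻¹) • g‖ := by
          rw [zero_sub, neg_smul, neg_neg, ← norm_smul, smul_inv_smul₀ ht]
      _ ≤ ‖t‖ * ‖x - (-t⁻¹) • g‖ := by gcongr; exact h _ (G.smul_mem _ hg)
      _ = ‖g + t • x‖ := by
          rw [← norm_smul, neg_smul, sub_neg_eq_add, smul_add, smul_inv_smul₀ ht, add_comm]
  · simpa [norm_sub_rev x g, ← sub_eq_add_neg] using h g hg (-1)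

lemma StronglyOrthRel.birkhoffOrth {n : ℕ} {b : Fin n → X} {i j : Fin n}
    (hb : StronglyOrthRel b i) (hj : j ≠ i) : BirkhoffOrth (b i) (b j) := fun t => by
  rcases eq_or_ne t 0 with rfl | ht
  · simp
  have hsum : ∑ k ∈ Finset.univ.erase i, (Pi.single j t : Fin n → ℝ) k • b k = t • b j := by
    rw [Finset.sum_eq_single_of_mem j (by simp [hj]) fun k _ hk => by simp [hk],
      Pi.single_eq_same]
  simpa only [hsum] using (hb.2 (Pi.single j t) ⟨j, hj, by simpa using ht⟩).le

lemma norm_normingFunctional_le_one (x : X) : ‖normingFunctional x‖ ≤ 1 :=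
  (exists_dual_vector'' ℝ x).choose_spec.1

lemma normingFunctional_self (x : X) : normingFunctional x x = ‖x‖ :=
  (exists_dual_vector'' ℝ x).choose_spec.2

lemma abs_normingFunctional_le (x y : X) : |normingFunctional x y| ≤ ‖y‖ := by
  simpa using (normingFunctional x).le_of_opNorm_le (norm_normingFunctional_le_one x) y

lemma normingFunctional_mul_le (x y : X) :
    normingFunctional x y * normingFunctional y x ≤ ‖x‖ * ‖y‖ :=
  calc normingFunctional x y * normingFunctional y x
      ≤ |normingFunctional x y| * |normingFunctional y x| := by
        rw [← abs_mul]; exact le_abs_self _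
    _ ≤ ‖y‖ * ‖x‖ := by gcongr <;> exact abs_normingFunctional_le _ _
    _ = ‖x‖ * ‖y‖ := mul_comm _ _

lemma norm_eq_one_of_apply_eq_norm {g : StrongDual ℝ X} (hx : x ≠ 0) (hg : ‖g‖ ≤ 1)
    (hgx : g x = ‖x‖) : ‖g‖ = 1 := by
  have h := g.le_opNorm x
  rw [hgx, norm_norm] at h
  exact hg.antisymm (one_le_of_le_mul_right₀ (norm_pos_iff.2 hx) h)

lemma birkhoffOrth_of_apply_eq_zero (h : normingFunctional x y = 0) : BirkhoffOrth x y := fun t =>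
  calc ‖x‖ = normingFunctional x (x + t • y) := by simp [h, normingFunctional_self]
    _ ≤ ‖x + t • y‖ := (le_abs_self _).trans (abs_normingFunctional_le _ _)

lemma exists_birkhoffOrth_sub_smul (x y : X) : ∃ a : ℝ, BirkhoffOrth x (y - a • x) := by
  rcases eq_or_ne x 0 with rfl | hx
  · exact ⟨0, .zero_left _⟩
  refine ⟨normingFunctional x y / ‖x‖, birkhoffOrth_of_apply_eq_zero ?_⟩
  rw [map_sub, map_smul, normingFunctional_self, smul_eq_mul,
    div_mul_cancel₀ _ (norm_ne_zero_iff.2 hx), sub_self]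

/- The norming functional is pulled back from the quotient by the line `ℝ y`, in which the class of
`x` still has norm `‖x‖`. -/
lemma BirkhoffOrth.exists_norming_apply_eq_zero (hx : x ≠ 0) (hxy : BirkhoffOrth x y) :
    ∃ g : StrongDual ℝ X, ‖g‖ = 1 ∧ g x = ‖x‖ ∧ g y = 0 := by
  have hnorm : ‖(ℝ ∙ y).mkQ x‖ = ‖x‖ := by
    refine (Submodule.Quotient.norm_mk_le _ x).antisymm ?_
    refine (Metric.le_infDist ⟨0, zero_mem _⟩).2 (fun z hz => ?_) |>.trans_eq
      (QuotientAddGroup.norm_mk (S := (ℝ ∙ y).toAddSubgroup) x).symm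
    obtain ⟨t, rfl⟩ := mem_span_singleton.1 hz
    simpa [dist_eq_norm, sub_eq_add_neg] using hxy (-t)
  obtain ⟨g, hg, hgx⟩ := exists_dual_vector'' ℝ ((ℝ ∙ y).mkQ x)
  have hbound (z : X) : ‖g ((ℝ ∙ y).mkQ z)‖ ≤ 1 * ‖z‖ :=
    (g.le_of_opNorm_le hg _).trans (by gcongr; exact Submodule.Quotient.norm_mk_le _ z)
  let g' : StrongDual ℝ X := (g.toLinearMap ∘ₗ (ℝ ∙ y).mkQ).mkContinuous 1 hbound
  have hg'x : g' x = ‖x‖ := hgx.trans (by rw [hnorm]; rfl)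
  have hy : (ℝ ∙ y).mkQ y = 0 := by simp
  exact ⟨g', norm_eq_one_of_apply_eq_norm hx (LinearMap.mkContinuous_norm_le _ zero_le_one hbound)
    hg'x, hg'x, (congrArg g hy).trans (map_zero g)⟩

namespace SmoothSpace

variable (hsm : SmoothSpace X)
include hsm

lemma birkhoffOrth_iff (hx : x ≠ 0) : BirkhoffOrth x y ↔ normingFunctional x y = 0 := by
  refine ⟨fun h => ?_, birkhoffOrth_of_apply_eq_zero⟩
  obtain ⟨g, hg, hgx, hgy⟩ := h.exists_norming_apply_eq_zero hx
  have hself := normingFunctional_self x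
  have hnorm := norm_eq_one_of_apply_eq_norm hx (norm_normingFunctional_le_one x) hself
  rwa [(hsm x hx).unique ⟨hnorm, hself⟩ ⟨hg, hgx⟩]

lemma birkhoffOrth_add_right (hy : BirkhoffOrth x y) (hz : BirkhoffOrth x z) :
    BirkhoffOrth x (y + z) := by
  rcases eq_or_ne x 0 with rfl | hx
  · exact .zero_left _
  rw [hsm.birkhoffOrth_iff hx] at *
  rw [map_add, hy, hz, add_zero]

lemma birkhoffOrth_of_mem_span {s : Set X} (hs : ∀ y ∈ s, BirkhoffOrth x y) (hz : z ∈ span ℝ s) :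
    BirkhoffOrth x z := by
  induction hz using span_induction with
  | mem y hy => exact hs y hy
  | zero => exact .zero_right x
  | add _ _ _ _ hu hv => exact hsm.birkhoffOrth_add_right hu hv
  | smul c _ _ hu => exact hu.smul_right c

lemma mem_of_birkhoffOrth {G : Submodule ℝ X} (hxG : ∀ g ∈ G, BirkhoffOrth x g)
    (hspan : (ℝ ∙ x) ⊔ G = ⊤) (hxy : BirkhoffOrth x y) : y ∈ G := by
  obtain ⟨_, hu, g, hg, hsum⟩ := mem_sup.1 (hspan ▸ mem_top : y ∈ (ℝ ∙ x) ⊔ G)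
  obtain ⟨a, rfl⟩ := mem_span_singleton.1 hu
  have hax : BirkhoffOrth x (a • x) := by
    simpa [← hsum] using hsm.birkhoffOrth_add_right hxy ((hxG g hg).smul_right (-1))
  have : a • x = 0 := (hax.smul_left a).eq_zero_of_self
  rwa [← hsum, this, zero_add]

end SmoothSpace

lemma exists_ne_zero_birkhoffOrth_and (hrank : 3 ≤ Module.rank ℝ X) (x y : X) :
    ∃ z : X, z ≠ 0 ∧ BirkhoffOrth x z ∧ BirkhoffOrth y z := by
  let F : X →ₗ[ℝ] ℝ × ℝ :=
    (normingFunctional x).toLinearMap.prod (normingFunctional y).toLinearMap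
  have hker : F.ker ≠ ⊥ := fun h => by
    have hle := LinearMap.lift_rank_le_of_injective F (LinearMap.ker_eq_bot.1 h)
    have hprod : Module.rank ℝ (ℝ × ℝ) = 2 := by simp [one_add_one_eq_two]
    rw [hprod, Cardinal.lift_ofNat] at hle
    have := (Cardinal.lift_le.2 hrank).trans hle
    norm_num at this
  obtain ⟨z, hz, hz0⟩ := exists_mem_ne_zero_of_ne_bot hker
  obtain ⟨hxz, hyz⟩ := Prod.mk.inj (LinearMap.mem_ker.1 hz)
  exact ⟨z, hz0, birkhoffOrth_of_apply_eq_zero hxz, birkhoffOrth_of_apply_eq_zero hyz⟩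

end Orthogonality

section ConjugateSlope

lemma eq_self_of_monotone_of_involutive {α : Type*} [LinearOrder α] {m : α → α} (hmono : Monotone m)
    (hinv : Function.Involutive m) (a : α) : m a = a := by
  rcases le_total a (m a) with h | h
  · exact le_antisymm ((hmono h).trans_eq (hinv a)) h
  · exact le_antisymm h ((hinv a).symm.trans_le (hmono h))

lemma eq_mul_of_monotone_of_mul_of_neg_inv {α : ℝ → ℝ} (hmono : Monotone α) (hone : 0 < α 1)
    (hmul : ∀ t u, α (t * u) * α 1 = α t * α u) (hinv : ∀ t ≠ 0, α (-(α t)⁻¹) = -t⁻¹) (t : ℝ) :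
    α t = α 1 * t := by
  let m : ℝ → ℝ := fun t => α t / α 1
  have hα (t : ℝ) : α t = α 1 * m t := by simp only [m]; field_simp
  have m_mul (t u : ℝ) : m (t * u) = m t * m u := by
    simp only [m]; field_simp; linarith [hmul t u]
  have m_one : m 1 = 1 := div_self hone.ne'
  have m_inv {t : ℝ} (ht : t ≠ 0) : m t⁻¹ = (m t)⁻¹ :=
    eq_inv_of_mul_eq_one_left (by rw [← m_mul, inv_mul_cancel₀ ht, m_one])
  have m_ne_zero {t : ℝ} (ht : t ≠ 0) : m t ≠ 0 := fun h => by
    have := m_mul t t⁻¹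
    rw [mul_inv_cancel₀ ht, m_one, h, zero_mul] at this
    exact one_ne_zero this
  have m_zero : m 0 = 0 := by
    by_contra h0
    have m_const (t : ℝ) : m t = 1 := mul_left_cancel₀ h0 (by rw [← m_mul, zero_mul, mul_one])
    have h1 := hinv 1 one_ne_zero
    rw [hα, m_const, mul_one, inv_one] at h1
    linarith
  have involutive : Function.Involutive m := fun t => by
    rcases eq_or_ne t 0 with rfl | ht
    · rw [m_zero, m_zero]
    have h1 := hinv 1 one_ne_zero
    have ht' := hinv t ht
    rw [hα t, mul_inv, ← neg_mul, hα, m_mul, m_inv (m_ne_zero ht), ← mul_assoc, ← hα, h1] at ht'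
    simpa using ht'
  rw [hα, eq_self_of_monotone_of_involutive (fun a b hab => ?_) involutive]
  exact div_le_div_of_nonneg_right (hmono hab) hone.le

variable {X : Type*} [NormedAddCommGroup X] [NormedSpace ℝ X] {e h k : X}

lemma BirkhoffOrth.normingFunctional_add_smul_nonneg (hhe : BirkhoffOrth h e) (t : ℝ) :
    0 ≤ normingFunctional (e + t • h) e := by
  have hth : ‖t • h‖ ≤ ‖e + t • h‖ := by
    simpa [add_comm] using (hhe.smul_left t) 1
  have hsum := normingFunctional_self (e + t • h)
  rw [map_add] at hsum
  linarith [(abs_le.1 (abs_normingFunctional_le (e + t • h) (t • h))).2]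

namespace SmoothSpace

variable [Std.Symm (BirkhoffOrth (X := X))] (hsm : SmoothSpace X)
include hsm

lemma birkhoffOrth_add_left {x y z : X} (hx : BirkhoffOrth x z) (hy : BirkhoffOrth y z) :
    BirkhoffOrth (x + y) z :=
  symm (hsm.birkhoffOrth_add_right (symm hx) (symm hy))

lemma normingFunctional_add_smul_pos (he : e ≠ 0) (heh : BirkhoffOrth e h) (t : ℝ) :
    0 < normingFunctional (e + t • h) e := by
  refine ((symm heh).normingFunctional_add_smul_nonneg t).lt_of_ne' fun h0 => he ?_
  have hsum : BirkhoffOrth e (e + t • h) := symm (birkhoffOrth_of_apply_eq_zero h0)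
  refine BirkhoffOrth.eq_zero_of_self ?_
  simpa using hsm.birkhoffOrth_add_right hsum (heh.smul_right (-t))

lemma birkhoffOrth_sub_smul_iff (he : e ≠ 0) (heh : BirkhoffOrth e h) {t a : ℝ} :
    BirkhoffOrth (e + t • h) (h - a • e) ↔ conjugateSlope e h t = a := by
  rw [hsm.birkhoffOrth_iff (heh.add_smul_ne_zero he t), map_sub, map_smul, smul_eq_mul,
    conjugateSlope, div_eq_iff (hsm.normingFunctional_add_smul_pos he heh t).ne', sub_eq_zero]

lemma birkhoffOrth_conjugateSlope (he : e ≠ 0) (heh : BirkhoffOrth e h) (t : ℝ) :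
    BirkhoffOrth (e + t • h) (h - conjugateSlope e h t • e) :=
  (hsm.birkhoffOrth_sub_smul_iff he heh).2 rfl

lemma conjugateSlope_mul (he : e ≠ 0) (hh : h ≠ 0) (heh : BirkhoffOrth e h)
    (hek : BirkhoffOrth e k) (hhk : BirkhoffOrth h k) (t u : ℝ) :
    conjugateSlope e k (t * u) = conjugateSlope e h t * conjugateSlope h k u := by
  set a := conjugateSlope e h t
  set b := conjugateSlope h k u
  set x := e + t • h + (t * u) • k with hx
  -- Both `h - a e` and `k - b h` are orthogonal to `x`, hence so is `k - (b a) e`, which is also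
  -- orthogonal to `h`.
  have hxa : BirkhoffOrth x (h - a • e) := by
    refine hsm.birkhoffOrth_add_left (hsm.birkhoffOrth_conjugateSlope he heh t) ?_
    simpa [sub_eq_add_neg] using
      hsm.birkhoffOrth_add_right ((symm hhk).smul_left (t * u))
        (((symm hek).smul_left (t * u)).smul_right (-a))
  have hxb : BirkhoffOrth x (k - b • h) := by
    have hx' : x = e + t • (h + u • k) := by rw [hx]; module
    rw [hx']
    refine hsm.birkhoffOrth_add_left ?_ ((hsm.birkhoffOrth_conjugateSlope hh hhk u).smul_left t)
    simpa [sub_eq_add_neg] using hsm.birkhoffOrth_add_right hek (heh.smul_right (-b))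
  have hxab : BirkhoffOrth x (k - (a * b) • e) := by
    convert hsm.birkhoffOrth_add_right hxb (hxa.smul_right b) using 1
    module
  have hhab : BirkhoffOrth h (k - (a * b) • e) := by
    simpa [sub_eq_add_neg] using hsm.birkhoffOrth_add_right hhk ((symm heh).smul_right (-(a * b)))
  rw [← hsm.birkhoffOrth_sub_smul_iff he hek]
  convert hsm.birkhoffOrth_add_left hxab (hhab.smul_left (-t)) using 1
  rw [hx]; module

lemma conjugateSlope_eq_zero_iff (he : e ≠ 0) (hh : h ≠ 0) (heh : BirkhoffOrth e h) {t : ℝ} :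
    conjugateSlope e h t = 0 ↔ t = 0 := by
  rw [← hsm.birkhoffOrth_sub_smul_iff he heh, zero_smul, sub_zero]
  refine ⟨fun ht => by_contra fun ht0 => hh ?_, ?_⟩
  · have hth : BirkhoffOrth h (t • h) := by
      simpa using hsm.birkhoffOrth_add_right (symm ht) ((symm heh).smul_right (-1))
    exact BirkhoffOrth.eq_zero_of_self (by simpa [ht0] using hth.smul_right t⁻¹)
  · rintro rfl
    simpa using heh

lemma conjugateSlope_neg_inv (he : e ≠ 0) (hh : h ≠ 0) (heh : BirkhoffOrth e h) {t : ℝ}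
    (ht : t ≠ 0) : conjugateSlope e h (-(conjugateSlope e h t)⁻¹) = -t⁻¹ := by
  have ha : conjugateSlope e h t ≠ 0 := mt (hsm.conjugateSlope_eq_zero_iff he hh heh).1 ht
  have horth := symm (hsm.birkhoffOrth_conjugateSlope he heh t)
  rw [← hsm.birkhoffOrth_sub_smul_iff he heh]
  convert (horth.smul_left (-(conjugateSlope e h t)⁻¹)).smul_right t⁻¹ using 1
  · rw [smul_sub, smul_smul, neg_mul, inv_mul_cancel₀ ha]; module
  · rw [smul_add, smul_smul, inv_mul_cancel₀ ht]; module

lemma conjugateSlope_monotone (he : e ≠ 0) (heh : BirkhoffOrth e h) :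
    Monotone (conjugateSlope e h) := fun s t hst => by
  rcases hst.eq_or_lt with rfl | hlt
  · rfl
  have hle := normingFunctional_mul_le (e + s • h) (e + t • h)
  rw [← normingFunctional_self, ← normingFunctional_self] at hle
  simp only [map_add, map_smul, smul_eq_mul] at hle
  rw [conjugateSlope, conjugateSlope, div_le_div_iff₀
    (hsm.normingFunctional_add_smul_pos he heh s) (hsm.normingFunctional_add_smul_pos he heh t)]
  refine le_of_mul_le_mul_left ?_ (sub_pos.2 hlt)
  linarith

lemma conjugateSlope_one_pos (he : e ≠ 0) (hh : h ≠ 0) (heh : BirkhoffOrth e h) :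
    0 < conjugateSlope e h 1 := by
  have hzero : conjugateSlope e h 0 = 0 := (hsm.conjugateSlope_eq_zero_iff he hh heh).2 rfl
  have hne : conjugateSlope e h 1 ≠ 0 := mt (hsm.conjugateSlope_eq_zero_iff he hh heh).1 one_ne_zero
  exact (hzero.symm.trans_le (hsm.conjugateSlope_monotone he heh zero_le_one)).lt_of_ne' hne

lemma conjugateSlope_eq_mul (hrank : 3 ≤ Module.rank ℝ X) (he : e ≠ 0) (hh : h ≠ 0)
    (heh : BirkhoffOrth e h) (t : ℝ) : conjugateSlope e h t = conjugateSlope e h 1 * t := by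
  obtain ⟨k, hk, hek, hhk⟩ := exists_ne_zero_birkhoffOrth_and hrank e h
  have hmul := hsm.conjugateSlope_mul he hh heh hek hhk
  have hβ : conjugateSlope h k 1 ≠ 0 := (hsm.conjugateSlope_one_pos hh hk hhk).ne'
  refine eq_mul_of_monotone_of_mul_of_neg_inv (hsm.conjugateSlope_monotone he heh)
    (hsm.conjugateSlope_one_pos he hh heh) (fun t u => ?_)
    (fun t ht => hsm.conjugateSlope_neg_inv he hh heh ht) t
  have proportional : conjugateSlope e h u * conjugateSlope h k 1
      = conjugateSlope e h 1 * conjugateSlope h k u := by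
    rw [← hmul, ← hmul, mul_comm]
  have hsplit : conjugateSlope e h (t * u) * conjugateSlope h k 1
      = conjugateSlope e h t * conjugateSlope h k u := by
    rw [← hmul, ← hmul, mul_one]
  refine mul_right_cancel₀ hβ ?_
  linear_combination conjugateSlope e h 1 * hsplit - conjugateSlope e h t * proportional

end SmoothSpace

end ConjugateSlope

section Pythagoras

variable {X : Type*} [NormedAddCommGroup X] [NormedSpace ℝ X] {e h : X}

lemma eq_of_norm_sub_le_mul_sq {E F : Type*} [NormedAddCommGroup E] [NormedSpace ℝ E]
    [NormedAddCommGroup F] [NormedSpace ℝ F] {f : E → F} {C : ℝ}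
    (hf : ∀ x y, ‖f y - f x‖ ≤ C * ‖y - x‖ ^ 2) (x y : E) : f x = f y := by
  have hderiv (x : E) : HasFDerivAt f (0 : E →L[ℝ] F) x := by
    have hO : (fun y => f y - f x) =O[nhds x] fun y => ‖y - x‖ ^ 2 :=
      .of_bound C (.of_forall fun y => by simpa using hf x y)
    exact (hasFDerivAt_sub_const_iff (f x)).1 (hO.hasFDerivAt one_lt_two)
  exact is_const_of_fderiv_eq_zero (fun x => (hderiv x).differentiableAt)
    (fun x => (hderiv x).fderiv) x y

lemma cos_sub_mul_norm_le (hturn : ∀ a b : ℝ, BirkhoffOrth (a • e + b • h) (a • h - b • e))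
    (s t : ℝ) :
    Real.cos (t - s) * ‖Real.cos s • e + Real.sin s • h‖ ≤ ‖Real.cos t • e + Real.sin t • h‖ := by
  have hrot : Real.cos t • e + Real.sin t • h
      = Real.cos (t - s) • (Real.cos s • e + Real.sin s • h)
        + Real.sin (t - s) • (Real.cos s • h - Real.sin s • e) := by
    conv_lhs => rw [← sub_add_cancel t s, Real.cos_add, Real.sin_add]
    module
  calc Real.cos (t - s) * ‖Real.cos s • e + Real.sin s • h‖
      ≤ ‖Real.cos (t - s)‖ * ‖Real.cos s • e + Real.sin s • h‖ := by gcongr; exact le_abs_self _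
    _ = ‖Real.cos (t - s) • (Real.cos s • e + Real.sin s • h)‖ := (norm_smul _ _).symm
    _ ≤ ‖Real.cos t • e + Real.sin t • h‖ := by rw [hrot]; exact (hturn _ _).smul_left _ _

lemma norm_cos_smul_add_sin_smul
    (hturn : ∀ a b : ℝ, BirkhoffOrth (a • e + b • h) (a • h - b • e)) (θ : ℝ) :
    ‖Real.cos θ • e + Real.sin θ • h‖ = ‖e‖ := by
  let ρ : ℝ → ℝ := fun θ => ‖Real.cos θ • e + Real.sin θ • h‖
  have hbound (θ : ℝ) : ρ θ ≤ ‖e‖ + ‖h‖ := by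
    refine (norm_add_le _ _).trans ?_
    rw [norm_smul, norm_smul]
    gcongr
    · exact mul_le_of_le_one_left (norm_nonneg _) (Real.abs_cos_le_one θ)
    · exact mul_le_of_le_one_left (norm_nonneg _) (Real.abs_sin_le_one θ)
  have hdiff (s t : ℝ) : ρ s - ρ t ≤ (‖e‖ + ‖h‖) / 2 * (t - s) ^ 2 := by
    have hcos : (1 - (t - s) ^ 2 / 2) * ρ s ≤ ρ t := by
      refine le_trans ?_ (cos_sub_mul_norm_le hturn s t)
      gcongr
      exact Real.one_sub_sq_div_two_le_cos
    nlinarith [mul_le_mul_of_nonneg_right (hbound s) (sq_nonneg (t - s))]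
  have hquad (s t : ℝ) : ‖ρ t - ρ s‖ ≤ (‖e‖ + ‖h‖) / 2 * ‖t - s‖ ^ 2 := by
    rw [Real.norm_eq_abs (t - s), sq_abs]
    exact abs_sub_le_iff.2 ⟨by linarith [hdiff t s, sub_sq_comm s t], hdiff s t⟩
  simpa [ρ] using eq_of_norm_sub_le_mul_sq hquad θ 0

lemma norm_smul_add_smul_sq
    (hturn : ∀ a b : ℝ, BirkhoffOrth (a • e + b • h) (a • h - b • e)) (a b : ℝ) :
    ‖a • e + b • h‖ ^ 2 = (a ^ 2 + b ^ 2) * ‖e‖ ^ 2 := by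
  let z : ℂ := ⟨a, b⟩
  have hz : a • e + b • h = ‖z‖ • (Real.cos z.arg • e + Real.sin z.arg • h) := by
    rw [smul_add, smul_smul, smul_smul, Complex.norm_mul_cos_arg, Complex.norm_mul_sin_arg]
  rw [hz, norm_smul, norm_cos_smul_add_sin_smul hturn, norm_norm, mul_pow, Complex.sq_norm,
    Complex.normSq_mk, sq a, sq b]

namespace SmoothSpace

variable [Std.Symm (BirkhoffOrth (X := X))] (hsm : SmoothSpace X) (hrank : 3 ≤ Module.rank ℝ X)
include hsm hrank

lemma exists_birkhoffOrth_quarterTurn (he : e ≠ 0) (hh : h ≠ 0) (heh : BirkhoffOrth e h) :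
    ∃ c : ℝ, c ≠ 0 ∧
      ∀ a b : ℝ, BirkhoffOrth (a • e + b • c • h) (a • c • h - b • e) := by
  have hpos := hsm.conjugateSlope_one_pos he hh heh
  set κ := conjugateSlope e h 1
  have hκ : κ * (√κ)⁻¹ * (√κ)⁻¹ = 1 := by
    rw [mul_assoc, ← mul_inv, Real.mul_self_sqrt hpos.le, mul_inv_cancel₀ hpos.ne']
  refine ⟨(√κ)⁻¹, by positivity, fun a b => ?_⟩
  set c := (√κ)⁻¹
  rcases eq_or_ne a 0 with rfl | ha
  · simpa [smul_smul] using ((symm heh).smul_left (b * c)).smul_right (-b)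
  have horth : BirkhoffOrth (e + (b / a * c) • h) (h - (κ * (b / a * c)) • e) :=
    (hsm.birkhoffOrth_sub_smul_iff he heh).2 (hsm.conjugateSlope_eq_mul hrank he hh heh _)
  convert (horth.smul_left a).smul_right (a * c) using 1
  · rw [smul_add, smul_smul, smul_smul]
    congr 2
    field_simp
  · rw [smul_sub, smul_smul, smul_smul]
    congr 2
    have : a * c * (κ * (b / a * c)) = b * (κ * c * c) := by field_simp
    rw [this, hκ, mul_one]

lemma norm_add_sq_of_birkhoffOrth {x y : X} (hxy : BirkhoffOrth x y) :
    ‖x + y‖ ^ 2 = ‖x‖ ^ 2 + ‖y‖ ^ 2 := by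
  rcases eq_or_ne x 0 with rfl | hx
  · simp
  rcases eq_or_ne y 0 with rfl | hy
  · simp
  obtain ⟨c, hc, hturn⟩ := hsm.exists_birkhoffOrth_quarterTurn hrank hx hy hxy
  have hsum := norm_smul_add_smul_sq hturn 1 c⁻¹
  have hright := norm_smul_add_smul_sq hturn 0 c⁻¹
  rw [one_smul, inv_smul_smul₀ hc] at hsum
  rw [zero_smul, zero_add, inv_smul_smul₀ hc] at hright
  rw [hsum, hright]
  ring

lemma parallelogram_law (x y : X) :
    ‖x + y‖ * ‖x + y‖ + ‖x - y‖ * ‖x - y‖ = 2 * (‖x‖ * ‖x‖ + ‖y‖ * ‖y‖) := by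
  obtain ⟨a, hxq⟩ := exists_birkhoffOrth_sub_smul x y
  obtain ⟨q, rfl⟩ : ∃ q, y = a • x + q := ⟨y - a • x, by abel⟩
  rw [add_sub_cancel_left] at hxq
  have hnorm (c d : ℝ) : ‖c • x + d • q‖ ^ 2 = c ^ 2 * ‖x‖ ^ 2 + d ^ 2 * ‖q‖ ^ 2 := by
    rw [hsm.norm_add_sq_of_birkhoffOrth hrank ((hxq.smul_left c).smul_right d), norm_smul,
      norm_smul, mul_pow, mul_pow, Real.norm_eq_abs, Real.norm_eq_abs, sq_abs, sq_abs]
  have hadd : x + (a • x + q) = (1 + a) • x + (1 : ℝ) • q := by module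
  have hsub : x - (a • x + q) = (1 - a) • x + (-1 : ℝ) • q := by module
  have hy : a • x + q = a • x + (1 : ℝ) • q := by module
  simp only [← sq]
  rw [hadd, hsub, hy, hnorm, hnorm, hnorm]
  ring

theorem nonempty_innerProductSpace_of_symm : Nonempty (InnerProductSpace ℝ X) :=
  ⟨.ofNorm ℝ (hsm.parallelogram_law hrank)⟩

end SmoothSpace

end Pythagoras

section Basis

variable {X : Type*} [NormedAddCommGroup X] [NormedSpace ℝ X]

lemma symm_birkhoffOrth_of_norm_eq_one
    (hunit : ∀ x y : X, ‖x‖ = 1 → BirkhoffOrth x y → BirkhoffOrth y x) :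
    Std.Symm (BirkhoffOrth (X := X)) where
  symm x y hxy := by
    rcases eq_or_ne x 0 with rfl | hx
    · exact .zero_right y
    have := (hunit _ y (norm_smul_inv_norm (𝕜 := ℝ) hx) (hxy.smul_left _)).smul_right ‖x‖
    simpa [smul_smul, hx] using this

lemma SmoothSpace.birkhoffOrth_symm_of_basis (hsm : SmoothSpace X) {n : ℕ} {b : Fin n → X}
    (hspan : span ℝ (Set.range b) = ⊤) {i : Fin n} (hb : StronglyOrthRel b i)
    (hco : ∀ g ∈ span ℝ (b '' {j | j ≠ i}), ‖(0 : X) - g‖ ≤ ‖b i - g‖) {y : X}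
    (hy : BirkhoffOrth (b i) y) : BirkhoffOrth y (b i) := by
  refine norm_zero_sub_le_iff_birkhoffOrth.1 hco y (hsm.mem_of_birkhoffOrth (fun g hg => ?_) ?_ hy)
  · refine hsm.birkhoffOrth_of_mem_span ?_ hg
    rintro _ ⟨j, hj, rfl⟩
    exact hb.birkhoffOrth hj
  · have hrange : Set.range b = {b i} ∪ b '' {j | j ≠ i} := by
      rw [← Set.image_singleton, ← Set.image_union, ← Set.image_univ]
      congr 1
      ext j
      simp [em]
    rw [← span_union, ← hrange, hspan]

end Basis

section InnerProduct

variable {X : Type*} [NormedAddCommGroup X] [InnerProductSpace ℝ X]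

lemma norm_lt_norm_add_of_inner_eq_zero {x y : X} (hxy : inner ℝ x y = 0) (hy : y ≠ 0) :
    ‖x‖ < ‖x + y‖ := by
  refine lt_of_mul_self_lt_mul_self₀ (norm_nonneg _) ?_
  rw [norm_add_sq_eq_norm_sq_add_norm_sq_real hxy]
  have := norm_pos_iff.2 hy
  exact lt_add_of_pos_right _ (by positivity)

lemma birkhoffOrth_of_inner_eq_zero {x y : X} (hxy : inner ℝ x y = 0) : BirkhoffOrth x y :=
  fun t => by
    rcases eq_or_ne (t • y) 0 with hty | hty
    · rw [hty, add_zero]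
    · exact (norm_lt_norm_add_of_inner_eq_zero (by rw [inner_smul_right, hxy, mul_zero]) hty).le

lemma exists_orthonormalBasis_apply_eq {n : ℕ} (hn : 0 < n)
    (hdim : Module.finrank ℝ X = n) {e : X} (he : ‖e‖ = 1) :
    ∃ (b : OrthonormalBasis (Fin n) ℝ X) (i : Fin n), b i = e := by
  have : FiniteDimensional ℝ X := .of_finrank_pos (hdim ▸ hn)
  let i : Fin n := ⟨0, hn⟩
  have hsingle : Orthonormal ℝ (({i} : Set (Fin n)).domRestrict fun _ => e) :=
    ⟨fun _ => he, fun j k hjk => absurd (Subsingleton.elim j k) hjk⟩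
  obtain ⟨b, hb⟩ := hsingle.exists_orthonormalBasis_extension_of_card_eq (by simpa using hdim)
  exact ⟨b, i, hb i rfl⟩

variable {n : ℕ} {b : Fin n → X} (hb : Orthonormal ℝ b)
include hb

lemma inner_eq_zero_of_mem_span_image {i : Fin n} {g : X} (hg : g ∈ span ℝ (b '' {j | j ≠ i})) :
    inner ℝ (b i) g = 0 := by
  have hle : span ℝ (b '' {j | j ≠ i}) ≤ (ℝ ∙ b i)ᗮ := by
    rw [span_le]
    rintro _ ⟨j, hj, rfl⟩
    exact mem_orthogonal_singleton_iff_inner_right.2 (hb.inner_eq_zero (Ne.symm hj))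
  exact mem_orthogonal_singleton_iff_inner_right.1 (hle hg)

lemma stronglyOrthSet_of_orthonormal : StronglyOrthSet b := by
  refine fun i => ⟨hb.1, fun c ⟨j, hji, hcj⟩ => ?_⟩
  refine norm_lt_norm_add_of_inner_eq_zero ?_ fun hzero => ?_
  · refine inner_eq_zero_of_mem_span_image hb (sum_mem fun k hk => smul_mem _ _ (subset_span ?_))
    exact ⟨k, Finset.ne_of_mem_erase hk, rfl⟩
  · exact hcj (linearIndependent_iff'.1 hb.linearIndependent _ c hzero j (by simp [hji]))

lemma norm_zero_sub_le_of_orthonormal (i : Fin n) :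
    ∀ g ∈ span ℝ (b '' {j | j ≠ i}), ‖0 - g‖ ≤ ‖b i - g‖ :=
  norm_zero_sub_le_iff_birkhoffOrth.2 fun _ hg => birkhoffOrth_of_inner_eq_zero <| by
    rw [real_inner_comm, inner_eq_zero_of_mem_span_image hb hg]

end InnerProduct

theorem stmt_11 {X : Type*} [NormedAddCommGroup X] [NormedSpace ℝ X] {n : ℕ}
    (hn : 3 ≤ n) (hdim : Module.finrank ℝ X = n) (hsm : SmoothSpace X) :
    Nonempty (InnerProductSpace ℝ X) ↔
      ∀ e : X, ‖e‖ = 1 →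
        ∃ b : Fin n → X,
          LinearIndependent ℝ b ∧ Submodule.span ℝ (Set.range b) = ⊤ ∧
          StronglyOrthSet b ∧ (∃ i, b i = e) ∧
          ∀ i : Fin n, ∀ g ∈ Submodule.span ℝ (b '' {j | j ≠ i}),
            ‖(0 : X) - g‖ ≤ ‖b i - g‖ := by
  constructor
  · rintro ⟨I⟩ e he
    -- `I` carries a scalar multiplication of its own; rebuild it over the given one.
    let J : InnerProductSpace ℝ X := .ofNorm ℝ (@parallelogram_law_with_norm_mul ℝ X _ _ I)
    obtain ⟨b, i, hbi⟩ := @exists_orthonormalBasis_apply_eq X _ J n (by omega) hdim e he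
    exact ⟨b, b.orthonormal.linearIndependent, by simpa using b.toBasis.span_eq,
      @stronglyOrthSet_of_orthonormal X _ J n b b.orthonormal, ⟨i, hbi⟩,
      @norm_zero_sub_le_of_orthonormal X _ J n b b.orthonormal⟩
  · intro H
    have : Std.Symm (BirkhoffOrth (X := X)) := symm_birkhoffOrth_of_norm_eq_one fun e y he hy => by
      obtain ⟨b, -, hspan, hso, ⟨i, rfl⟩, hco⟩ := H e he
      exact hsm.birkhoffOrth_symm_of_basis hspan (hso i) (hco i) hy
    have : FiniteDimensional ℝ X := .of_finrank_pos (by omega)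
    refine hsm.nonempty_innerProductSpace_of_symm ?_
    rw [← Module.finrank_eq_rank, hdim]
    exact_mod_cast hn
end
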